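/- arXiv:2512.16894 — 2 statements merged into one kernel-verified Lean document; each statement's English description precedes it below -/
import Mathlib

section
/- Let γ > 0 and let Θ be a σ-finite Borel measure on the space ℝ≥0^ℕ of nonnegative sequences. Let Ξ^H be the pushforward of the product measure ν_{−γ} ⊗ Θ under the map (y₁, y) ↦ (1, y₁, y₁·y), a measure on ℝ≥0 × (0,1) × ℝ≥0^ℕ. For x > 0 define G^H_x(1, y₁, z) := ( 1, m_{1/x}(y₁), (m_{1/x}(y₁)/y₁)·z ) for y₁ ∈ (0,1). Then: (i) for every x > 0, the pushforward of Ξ^H under G^H_x equals x^{−γ}·Ξ^H; (ii) for every point (1, y₁, z) with y₁ ∈ (0,1), the map x ↦ x·G^H_x(1, y₁, z) is coordinate-wise nondecreasing on (0, ∞); in particular x·G^H_x(1, y₁, z) ≤ (1, y₁, z) coordinate-wise for x ∈ (0,1]. -/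
open MeasureTheory Set

/-- The magic function `m_x(y) = x·y/(x·y + (1 − y))`. -/
noncomputable def magic (x y : ℝ) : ℝ := x * y / (x * y + (1 - y))

/-- The measure `ν_γ` on `[0,1)` with density `y^{γ−1}·(1 − y)^{−1−γ}`. -/
noncomputable def nuGamma (γ : ℝ) : Measure ℝ :=
  (volume.restrict (Ico 0 1)).withDensity fun y =>
    ENNReal.ofReal (y ^ (γ - 1) * (1 - y) ^ (-1 - γ))

/-!
In the odds coordinate `t = y / (1 - y)` the map `magic x` is `t ↦ x * t` and `nuGamma γ` is
`t ^ (γ - 1) dt`, so `magic x` multiplies `nuGamma γ` by `x ^ (-γ)`. Replacing `y₁` by `f y₁` and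
the sequence `z` by `(f y₁ / y₁) • z` leaves the quotient `z / y₁` unchanged; hence on a measure of
height form it acts as `f × id` on the underlying product measure. Finally
`x * magic x⁻¹ y = y / (x⁻¹ * y + (1 - y))`, whose denominator decreases in `x`.
-/

section Magic

variable {a b x y : ℝ}

lemma magic_denom_pos (hx : 0 < x) (hy : y ∈ Icc (0 : ℝ) 1) : 0 < x * y + (1 - y) := by
  rcases hy.1.eq_or_lt with rfl | hy₀
  · norm_num
  · exact add_pos_of_pos_of_nonneg (mul_pos hx hy₀) (sub_nonneg.2 hy.2)

lemma magic_one (y : ℝ) : magic 1 y = y := by simp [magic]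

lemma measurable_magic (x : ℝ) : Measurable (magic x) := by
  unfold magic
  fun_prop

lemma one_sub_magic (hD : x * y + (1 - y) ≠ 0) :
    1 - magic x y = (1 - y) / (x * y + (1 - y)) := by
  rw [magic, one_sub_div hD, add_sub_cancel_left]

lemma magic_div_one_sub_magic (hD : x * y + (1 - y) ≠ 0) :
    magic x y / (1 - magic x y) = x * (y / (1 - y)) := by
  rw [one_sub_magic hD, magic, div_div_div_cancel_right₀ hD, mul_div_assoc]

lemma magic_magic (hD : b * y + (1 - y) ≠ 0) : magic a (magic b y) = magic (a * b) y := by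
  rw [magic, one_sub_magic hD, magic, ← mul_div_assoc, ← add_div, div_div_div_cancel_right₀ hD,
    magic, mul_assoc]

lemma leftInvOn_magic (hx : 0 < x) : LeftInvOn (magic x⁻¹) (magic x) (Icc 0 1) := fun y hy => by
  rw [magic_magic (magic_denom_pos hx hy).ne', inv_mul_cancel₀ hx.ne', magic_one]

lemma mapsTo_magic_Ioo (hx : 0 < x) : MapsTo (magic x) (Ioo 0 1) (Ioo 0 1) := fun y hy => by
  have hD := magic_denom_pos hx (Ioo_subset_Icc_self hy)
  refine ⟨div_pos (mul_pos hx hy.1) hD, sub_pos.1 ?_⟩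
  rw [one_sub_magic hD.ne']
  exact div_pos (sub_pos.2 hy.2) hD

lemma image_magic_Ioo (hx : 0 < x) : magic x '' Ioo 0 1 = Ioo 0 1 := by
  refine (mapsTo_magic_Ioo hx).image_subset.antisymm fun y hy =>
    ⟨magic x⁻¹ y, mapsTo_magic_Ioo (inv_pos.2 hx) hy, ?_⟩
  simpa only [inv_inv] using leftInvOn_magic (inv_pos.2 hx) (Ioo_subset_Icc_self hy)

lemma hasDerivAt_magic (hD : x * y + (1 - y) ≠ 0) :
    HasDerivAt (magic x) (x / (x * y + (1 - y)) ^ 2) y := by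
  have hnum : HasDerivAt (fun y => x * y) x y := by simpa using (hasDerivAt_id y).const_mul x
  have hden : HasDerivAt (fun y => x * y + (1 - y)) (x + -1) y :=
    hnum.add ((hasDerivAt_id y).const_sub 1)
  convert! hnum.div hden hD using 1
  ring

lemma mul_magic_inv (hx : x ≠ 0) (y : ℝ) : x * magic x⁻¹ y = y / (x⁻¹ * y + (1 - y)) := by
  rw [magic, ← mul_div_assoc, mul_inv_cancel_left₀ hx]

lemma monotoneOn_mul_magic_inv (hy : y ∈ Icc (0 : ℝ) 1) :
    MonotoneOn (fun x => x * magic x⁻¹ y) (Ioi 0) := by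
  intro a (ha : 0 < a) b (hb : 0 < b) hab
  have hba : b⁻¹ ≤ a⁻¹ := inv_anti₀ ha hab
  simp only [mul_magic_inv ha.ne', mul_magic_inv hb.ne']
  have hDb := magic_denom_pos (inv_pos.2 hb) hy
  have hy₀ := hy.1
  gcongr

end Magic

section NuGamma

variable {x y : ℝ}

instance (γ : ℝ) : SFinite (nuGamma γ) := by
  unfold nuGamma
  infer_instance

lemma nuGamma_eq_withDensity_Ioo (γ : ℝ) :
    nuGamma γ = (volume.restrict (Ioo 0 1)).withDensity fun y =>
      ENNReal.ofReal (y ^ (γ - 1) * (1 - y) ^ (-1 - γ)) := by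
  rw [nuGamma, Measure.restrict_congr_set Ioo_ae_eq_Ico]

lemma ae_nuGamma_mem_Ioo (γ : ℝ) : ∀ᵐ y ∂nuGamma γ, y ∈ Ioo (0 : ℝ) 1 := by
  rw [nuGamma_eq_withDensity_Ioo]
  exact (withDensity_absolutelyContinuous _ _).ae_le (ae_restrict_mem measurableSet_Ioo)

lemma rpow_mul_one_sub_rpow_eq_odds (γ : ℝ) (hy : y ∈ Ioo (0 : ℝ) 1) :
    y ^ (γ - 1) * (1 - y) ^ (-1 - γ) = (y / (1 - y)) ^ γ / (y * (1 - y)) := by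
  have hy₁ : 0 < 1 - y := sub_pos.2 hy.2
  rw [Real.rpow_sub_one hy.1.ne', ← neg_add', add_comm 1 γ, Real.rpow_neg hy₁.le,
    Real.rpow_add_one hy₁.ne', Real.div_rpow hy.1.le hy₁.le]
  field_simp

lemma nuGamma_apply_of_subset_Ioo (γ : ℝ) {s : Set ℝ} (hs : MeasurableSet s) (hs₀₁ : s ⊆ Ioo 0 1) :
    nuGamma γ s = ∫⁻ y in s, ENNReal.ofReal ((y / (1 - y)) ^ γ / (y * (1 - y))) := by
  rw [nuGamma_eq_withDensity_Ioo, withDensity_apply _ hs, Measure.restrict_restrict hs,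
    inter_eq_self_of_subset_left hs₀₁]
  exact setLIntegral_congr_fun hs fun y hy => by rw [rpow_mul_one_sub_rpow_eq_odds γ (hs₀₁ hy)]

lemma deriv_magic_mul_density_magic (γ : ℝ) (hx : 0 < x) (hy : y ∈ Ioo (0 : ℝ) 1) :
    x / (x * y + (1 - y)) ^ 2 *
        ((magic x y / (1 - magic x y)) ^ γ / (magic x y * (1 - magic x y))) =
      x ^ γ * ((y / (1 - y)) ^ γ / (y * (1 - y))) := by
  have hD := (magic_denom_pos hx (Ioo_subset_Icc_self hy)).ne'
  have hy₀ : 0 < y := hy.1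
  have hy₁ : 0 < 1 - y := sub_pos.2 hy.2
  rw [magic_div_one_sub_magic hD, Real.mul_rpow hx.le (by positivity), one_sub_magic hD, magic]
  field_simp

lemma nuGamma_image_magic (γ : ℝ) (hx : 0 < x) {s : Set ℝ} (hs : MeasurableSet s)
    (hs₀₁ : s ⊆ Ioo 0 1) :
    nuGamma γ (magic x '' s) = ENNReal.ofReal (x ^ γ) * nuGamma γ s := by
  have hderiv : ∀ y ∈ s, HasDerivAt (magic x) (x / (x * y + (1 - y)) ^ 2) y := fun y hy =>
    hasDerivAt_magic (magic_denom_pos hx (Ioo_subset_Icc_self (hs₀₁ hy))).ne'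
  have hinj : InjOn (magic x) s :=
    (leftInvOn_magic hx).injOn.mono (hs₀₁.trans Ioo_subset_Icc_self)
  have himage : MeasurableSet (magic x '' s) :=
    hs.image_of_continuousOn_injOn (HasDerivAt.continuousOn hderiv) hinj
  rw [nuGamma_apply_of_subset_Ioo γ himage ((mapsTo_magic_Ioo hx).mono_left hs₀₁).image_subset,
    nuGamma_apply_of_subset_Ioo γ hs hs₀₁,
    lintegral_image_eq_lintegral_abs_deriv_mul hs (fun y hy => (hderiv y hy).hasDerivWithinAt) hinj,
    ← lintegral_const_mul' _ _ ENNReal.ofReal_ne_top]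
  refine setLIntegral_congr_fun hs fun y hy => ?_
  have hderiv_nonneg : 0 ≤ x / (x * y + (1 - y)) ^ 2 := by positivity
  simp only [abs_of_nonneg hderiv_nonneg, ← ENNReal.ofReal_mul hderiv_nonneg,
    deriv_magic_mul_density_magic γ hx (hs₀₁ hy), ENNReal.ofReal_mul (Real.rpow_nonneg hx.le γ)]

theorem map_magic_nuGamma (γ : ℝ) (hx : 0 < x) :
    (nuGamma γ).map (magic x) = ENNReal.ofReal (x ^ (-γ)) • nuGamma γ := by
  ext s hs
  have hinv : LeftInvOn (magic x) (magic x⁻¹) (Ioo 0 1) := by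
    simpa only [inv_inv] using (leftInvOn_magic (inv_pos.2 hx)).mono Ioo_subset_Icc_self
  have hpre : magic x ⁻¹' s ∩ Ioo 0 1 = magic x⁻¹ '' (s ∩ Ioo 0 1) := by
    rw [hinv.image_inter', image_magic_Ioo (inv_pos.2 hx)]
  have hnull : nuGamma γ (Ioo 0 1)ᶜ = 0 := ae_nuGamma_mem_Ioo γ
  rw [Measure.map_apply (measurable_magic x) hs, ← measure_inter_conull hnull, hpre,
    nuGamma_image_magic γ (inv_pos.2 hx) (hs.inter measurableSet_Ioo) inter_subset_right,
    measure_inter_conull hnull, ← Real.rpow_neg_eq_inv_rpow, Measure.smul_apply, smul_eq_mul]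

end NuGamma

section HeightForm

variable {ι : Type*}

/-- The measure of height form built from `μ` and `Θ`: the image of `μ ⊗ Θ` under
`(y₁, y) ↦ (1, y₁, y₁ * y)`. The measure `Ξ^H` is `heightForm (nuGamma (-γ)) Θ`. -/
noncomputable def heightForm (μ : Measure ℝ) (Θ : Measure (ι → ℝ)) : Measure (ℝ × ℝ × (ι → ℝ)) :=
  (μ.prod Θ).map fun p => (1, p.1, fun i => p.1 * p.2 i)

/-- Replace the first fragment `y₁` by `f y₁` and rescale the remaining fragments by the same
factor `f y₁ / y₁`. The map `G^H_x` is `rescaleFragments (magic x⁻¹)`. -/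
noncomputable def rescaleFragments (f : ℝ → ℝ) (p : ℝ × ℝ × (ι → ℝ)) : ℝ × ℝ × (ι → ℝ) :=
  (p.1, f p.2.1, fun i => f p.2.1 / p.2.1 * p.2.2 i)

lemma measurable_rescaleFragments {f : ℝ → ℝ} (hf : Measurable f) :
    Measurable (rescaleFragments f : ℝ × ℝ × (ι → ℝ) → ℝ × ℝ × (ι → ℝ)) := by
  unfold rescaleFragments
  fun_prop

lemma measurable_fragments :
    Measurable fun p : ℝ × (ι → ℝ) => ((1 : ℝ), p.1, fun i => p.1 * p.2 i) := by
  fun_prop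

lemma ae_heightForm_fst_eq_one_and_mem {μ : Measure ℝ} {s : Set ℝ} (hs : MeasurableSet s)
    (hμ : ∀ᵐ y ∂μ, y ∈ s) (Θ : Measure (ι → ℝ)) [SFinite Θ] :
    ∀ᵐ p ∂heightForm μ Θ, p.1 = 1 ∧ p.2.1 ∈ s := by
  have hmeas : MeasurableSet {p : ℝ × ℝ × (ι → ℝ) | p.1 = 1 ∧ p.2.1 ∈ s} :=
    (measurableSet_eq_fun measurable_fst measurable_const).inter (measurable_snd.fst hs)
  rw [heightForm, ae_map_iff measurable_fragments.aemeasurable hmeas]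
  filter_upwards [Measure.quasiMeasurePreserving_fst.ae hμ] with p hp using ⟨rfl, hp⟩

theorem map_rescaleFragments_heightForm {μ : Measure ℝ} [SFinite μ] {f : ℝ → ℝ} {c : ENNReal}
    (hf : Measurable f) (hμ : ∀ᵐ y ∂μ, y ≠ 0) (hfμ : μ.map f = c • μ)
    (Θ : Measure (ι → ℝ)) [SFinite Θ] :
    (heightForm μ Θ).map (rescaleFragments f) = c • heightForm μ Θ := by
  have hprod : (μ.prod Θ).map (Prod.map f id) = c • μ.prod Θ := by
    rw [← Measure.map_prod_map _ _ hf measurable_id, hfμ, Measure.map_id, Measure.prod_smul_left]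
  rw [heightForm, ← Measure.map_smul, ← hprod,
    Measure.map_map (measurable_rescaleFragments hf) measurable_fragments,
    Measure.map_map measurable_fragments (hf.prodMap measurable_id)]
  refine Measure.map_congr ?_
  filter_upwards [Measure.quasiMeasurePreserving_fst.ae hμ] with p hp
  simp only [Function.comp_apply, rescaleFragments, Prod.map_fst, Prod.map_snd, id_eq,
    ← mul_assoc, div_mul_cancel₀ _ hp]

lemma rescaleFragments_magic_one {y : ℝ} (hy : y ≠ 0) (h : ℝ) (z : ι → ℝ) :
    rescaleFragments (magic 1) (h, y, z) = (h, y, z) := by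
  simp only [rescaleFragments, magic_one, div_self hy, one_mul]

theorem monotoneOn_smul_rescaleFragments_magic_inv {h y : ℝ} {z : ι → ℝ} (hh : 0 ≤ h)
    (hy : y ∈ Ioc (0 : ℝ) 1) (hz : 0 ≤ z) :
    MonotoneOn (fun x : ℝ => x • rescaleFragments (magic x⁻¹) (h, y, z)) (Ioi 0) := by
  intro a ha b hb hab
  have hmagic : a * magic a⁻¹ y ≤ b * magic b⁻¹ y :=
    monotoneOn_mul_magic_inv (Ioc_subset_Icc_self hy) ha hb hab
  have hrest (x : ℝ) (i : ι) :
      x * (magic x⁻¹ y / y * z i) = x * magic x⁻¹ y * (z i / y) := by ring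
  refine ⟨mul_le_mul_of_nonneg_right hab hh, hmagic, fun i => ?_⟩
  change a * (magic a⁻¹ y / y * z i) ≤ b * (magic b⁻¹ y / y * z i)
  rw [hrest, hrest]
  exact mul_le_mul_of_nonneg_right hmagic (div_nonneg (hz i) hy.1.le)

theorem smul_rescaleFragments_magic_inv_le {x h y : ℝ} {z : ι → ℝ} (hx : x ∈ Ioc (0 : ℝ) 1)
    (hh : 0 ≤ h) (hy : y ∈ Ioc (0 : ℝ) 1) (hz : 0 ≤ z) :
    x • rescaleFragments (magic x⁻¹) (h, y, z) ≤ (h, y, z) := by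
  have hmono := monotoneOn_smul_rescaleFragments_magic_inv hh hy hz
  refine (hmono hx.1 (mem_Ioi.2 one_pos) hx.2).trans_eq ?_
  simp only [one_smul, inv_one, rescaleFragments_magic_one hy.1.ne']

theorem map_rescaleFragments_magic_inv_heightForm (γ : ℝ) {x : ℝ} (hx : 0 < x)
    (Θ : Measure (ι → ℝ)) [SFinite Θ] :
    (heightForm (nuGamma γ) Θ).map (rescaleFragments (magic x⁻¹)) =
      ENNReal.ofReal (x ^ γ) • heightForm (nuGamma γ) Θ := by
  refine map_rescaleFragments_heightForm (measurable_magic x⁻¹)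
    ((ae_nuGamma_mem_Ioo γ).mono fun y hy => hy.1.ne') ?_ Θ
  rw [map_magic_nuGamma γ (inv_pos.2 hx), Real.rpow_neg_eq_inv_rpow, inv_inv]

end HeightForm

theorem heightForm_is_GH_growing_general {ι : Type*} (γ : ℝ)
    (Θ : Measure (ι → ℝ)) [SFinite Θ]
    (ΞH : Measure (ℝ × ℝ × (ι → ℝ))) (hΞH : ΞH = heightForm (nuGamma (-γ)) Θ)
    (GH : ℝ → ℝ × ℝ × (ι → ℝ) → ℝ × ℝ × (ι → ℝ))
    (hGH : ∀ x > 0, ∀ y₁ ∈ Ioc (0 : ℝ) 1, ∀ z : ι → ℝ,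
      GH x (1, y₁, z) = (1, magic (1 / x) y₁, fun i => (magic (1 / x) y₁ / y₁) * z i)) :
    (∀ x > (0 : ℝ), ΞH.map (GH x) = ENNReal.ofReal (x ^ (-γ)) • ΞH) ∧
    (∀ y₁ ∈ Ioc (0 : ℝ) 1, ∀ z : ι → ℝ, (∀ i, 0 ≤ z i) →
      (MonotoneOn (fun x : ℝ => x * (GH x (1, y₁, z)).1) (Ioi 0) ∧
        MonotoneOn (fun x : ℝ => x * (GH x (1, y₁, z)).2.1) (Ioi 0) ∧
        ∀ i, MonotoneOn (fun x : ℝ => x * (GH x (1, y₁, z)).2.2 i) (Ioi 0)) ∧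
      (∀ x ∈ Ioc (0 : ℝ) 1,
        x * (GH x (1, y₁, z)).1 ≤ 1 ∧ x * (GH x (1, y₁, z)).2.1 ≤ y₁ ∧
          ∀ i, x * (GH x (1, y₁, z)).2.2 i ≤ z i)) := by
  have hG : ∀ x > 0, ∀ y ∈ Ioc (0 : ℝ) 1, ∀ z : ι → ℝ,
      GH x (1, y, z) = rescaleFragments (magic x⁻¹) (1, y, z) := by
    simpa only [one_div, rescaleFragments] using hGH
  subst hΞH
  refine ⟨fun x hx => ?_, fun y hy z hz => ⟨?_, fun x hx => ?_⟩⟩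
  · have hGae : GH x =ᵐ[heightForm (nuGamma (-γ)) Θ] rescaleFragments (magic x⁻¹) := by
      filter_upwards [ae_heightForm_fst_eq_one_and_mem measurableSet_Ioo
        (ae_nuGamma_mem_Ioo (-γ)) Θ]
      rintro ⟨_, y, z⟩ ⟨rfl, hy⟩
      exact hG x hx y (Ioo_subset_Ioc_self hy) z
    rw [Measure.map_congr hGae, map_rescaleFragments_magic_inv_heightForm (-γ) hx Θ]
  · have hmono : MonotoneOn (fun x : ℝ => x • GH x (1, y, z)) (Ioi 0) :=
      (monotoneOn_smul_rescaleFragments_magic_inv zero_le_one hy hz).congr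
        fun x hx => by rw [hG x hx y hy z]
    exact ⟨fun a ha b hb hab => (hmono ha hb hab).1, fun a ha b hb hab => (hmono ha hb hab).2.1,
      fun i a ha b hb hab => (hmono ha hb hab).2.2 i⟩
  · rw [hG x hx.1 y hy z]
    have hle := smul_rescaleFragments_magic_inv_le hx zero_le_one hy hz
    exact ⟨hle.1, hle.2⟩

/-- **Splitting measures of height form `H_γ` are `G^H`-growing (quasi-preservation and
monotonicity).**  Let `γ > 0`, `Θ` a σ-finite measure on nonnegative sequences, and
`Ξ^H` the pushforward of `ν_{−γ} ⊗ Θ` under `(y₁, y) ↦ (1, y₁, y₁·y)`.  With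
`G^H_x(1, y₁, z) = (1, m_{1/x}(y₁), (m_{1/x}(y₁)/y₁)·z)` (and `G^H_x` measurable):
(i) `(G^H_x)_♯ Ξ^H = x^{−γ}·Ξ^H` for every `x > 0`; (ii) `x ↦ x·G^H_x(1, y₁, z)` is
coordinate-wise nondecreasing on `(0,∞)`, and `x·G^H_x(1, y₁, z) ≤ (1, y₁, z)` for
`x ∈ (0,1]`. -/
theorem heightForm_is_GH_growing (γ : ℝ) (hγ : 0 < γ)
    (Θ : Measure (ℕ → ℝ)) [SigmaFinite Θ]
    (hΘ : Θ {z : ℕ → ℝ | ¬ ∀ i, 0 ≤ z i} = 0)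
    (ΞH : Measure (ℝ × ℝ × (ℕ → ℝ)))
    (hΞH : ΞH = Measure.map
      (fun p : ℝ × (ℕ → ℝ) => ((1:ℝ), p.1, fun i => p.1 * p.2 i))
      ((nuGamma (-γ)).prod Θ))
    (GH : ℝ → ℝ × ℝ × (ℕ → ℝ) → ℝ × ℝ × (ℕ → ℝ))
    (hGHmeas : ∀ x : ℝ, 0 < x → Measurable (GH x))
    (hGH : ∀ x : ℝ, ∀ y₁ : ℝ, ∀ z : ℕ → ℝ,
      GH x (1, y₁, z) = (1, magic (1 / x) y₁, fun i => (magic (1 / x) y₁ / y₁) * z i)) :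
    (∀ x > (0:ℝ), Measure.map (GH x) ΞH = ENNReal.ofReal (x ^ (-γ)) • ΞH) ∧
    (∀ y₁ ∈ Ioo (0:ℝ) 1, ∀ z : ℕ → ℝ, (∀ i, 0 ≤ z i) →
      (MonotoneOn (fun x : ℝ => x * (GH x (1, y₁, z)).1) (Ioi 0) ∧
        MonotoneOn (fun x : ℝ => x * (GH x (1, y₁, z)).2.1) (Ioi 0) ∧
        ∀ i, MonotoneOn (fun x : ℝ => x * (GH x (1, y₁, z)).2.2 i) (Ioi 0)) ∧
      (∀ x ∈ Ioc (0:ℝ) 1,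
        x * (GH x (1, y₁, z)).1 ≤ 1 ∧ x * (GH x (1, y₁, z)).2.1 ≤ y₁ ∧
          ∀ i, x * (GH x (1, y₁, z)).2.2 i ≤ z i)) := by
  obtain ⟨hmap, hgrow⟩ :=
    heightForm_is_GH_growing_general γ Θ ΞH hΞH GH fun x _ y₁ _ z => hGH x y₁ z
  exact ⟨hmap, fun y₁ hy₁ => hgrow y₁ (Ioo_subset_Ioc_self hy₁)⟩
end

section
/- For every s ∈ [1/2, 1), the map u : x ↦ 𝚏_x(s) is differentiable on (0, ∞), satisfies u(1) = s, and solves x·u'(x) = u(x)·(1 − u(x))·(2·u(x) − 1) for all x > 0. (This is the restriction of the locally largest generator system ∂_x y_i(x) = x^{−1}·y_i(x)·(y_i(x) − Σ_j y_j(x)²) to binary conservative data y = (y₀, 1 − y₀, 0, 0, …).) -/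
open Set

/-- `h(s) = (1 − 2s)²/(s(1 − s))`. -/
noncomputable def hBro (s : ℝ) : ℝ := (1 - 2 * s) ^ 2 / (s * (1 - s))

/-- The locally largest growing family of the Brownian CRT (by mass):
`𝚏_x(s) = (1/2)(1 + √(h(s)/(4x⁻¹ + h(s))))`. -/
noncomputable def fBro (x s : ℝ) : ℝ :=
  (1 / 2) * (1 + Real.sqrt (hBro s / (4 * x⁻¹ + hBro s)))

/-!
In the coordinate `w = (2u - 1)²` the equation `x u' = u (1 - u) (2u - 1)` becomes the logistic
equation `x w' = w (1 - w)`, whose solutions are `w(x) = h / (c x⁻¹ + h)`. The normalisation `c = 4`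
makes `w(1) = (2s - 1)²`. The square root is not differentiable at `w = 0`, that is at `s = 1/2`,
but there `u` is the constant equilibrium `1/2`.
-/

theorem hasDerivAt_div_mul_inv_add {𝕜 : Type*} [NontriviallyNormedField 𝕜] {c h x : 𝕜} (hx : x ≠ 0)
    (hd : c * x⁻¹ + h ≠ 0) :
    HasDerivAt (fun z => h / (c * z⁻¹ + h))
      (x⁻¹ * (h / (c * x⁻¹ + h) * (1 - h / (c * x⁻¹ + h)))) x := by
  have hden : HasDerivAt (fun z => c * z⁻¹ + h) (c * -(x ^ 2)⁻¹) x :=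
    ((hasDerivAt_inv hx).const_mul c).add_const h
  have hcompl : 1 - h / (c * x⁻¹ + h) = c * x⁻¹ / (c * x⁻¹ + h) := by
    rw [one_sub_div hd, add_sub_cancel_right]
  refine ((hasDerivAt_const x h).fun_div hden hd).congr_deriv ?_
  rw [hcompl]
  field_simp
  ring

theorem hasDerivAt_half_one_add_sqrt_of_logistic {w : ℝ → ℝ} {k x : ℝ}
    (hw : HasDerivAt w (k * (w x * (1 - w x))) x) (hpos : 0 < w x) :
    HasDerivAt (fun z => 1 / 2 * (1 + √(w z)))
      (k * (1 / 2 * (1 + √(w x)) * (1 - 1 / 2 * (1 + √(w x)))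
        * (2 * (1 / 2 * (1 + √(w x))) - 1))) x := by
  have hderiv := ((hw.sqrt hpos.ne').const_add 1).const_mul (1 / 2)
  refine hderiv.congr_deriv ?_
  calc 1 / 2 * (k * (w x * (1 - w x)) / (2 * √(w x)))
      = k / 4 * (w x / √(w x)) * (1 - w x) := by ring
    _ = k / 4 * √(w x) * (1 - √(w x) ^ 2) := by rw [Real.div_sqrt, Real.sq_sqrt hpos.le]
    _ = _ := by ring

theorem hBro_nonneg {s : ℝ} (hs : s ∈ Ioo (0 : ℝ) 1) : 0 ≤ hBro s :=
  div_nonneg (sq_nonneg _) (mul_pos hs.1 (sub_pos.mpr hs.2)).le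

theorem four_add_hBro {s : ℝ} (hs₀ : s ≠ 0) (hs₁ : s ≠ 1) : 4 + hBro s = (s * (1 - s))⁻¹ := by
  have hs₁' : 1 - s ≠ 0 := sub_ne_zero.mpr hs₁.symm
  unfold hBro
  field_simp
  ring

theorem hBro_div_four_add_hBro {s : ℝ} (hs₀ : s ≠ 0) (hs₁ : s ≠ 1) :
    hBro s / (4 + hBro s) = (2 * s - 1) ^ 2 := by
  have hprod : s * (1 - s) ≠ 0 := mul_ne_zero hs₀ (sub_ne_zero.mpr hs₁.symm)
  rw [four_add_hBro hs₀ hs₁, div_inv_eq_mul, hBro, div_mul_cancel₀ _ hprod]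
  ring

theorem fBro_one {s : ℝ} (hs₀ : s ≠ 0) (hs₁ : s ≠ 1) : fBro 1 s = max s (1 - s) :=
  calc fBro 1 s = 1 / 2 * (1 + |2 * s - 1|) := by
        rw [fBro, inv_one, mul_one, hBro_div_four_add_hBro hs₀ hs₁, Real.sqrt_sq_eq_abs]
    _ = (2⁻¹ : ℝ) • (1 - s + s + |s - (1 - s)|) := by rw [smul_eq_mul]; ring_nf
    _ = max (1 - s) s := (sup_eq_half_smul_add_add_abs_sub' ℝ (1 - s) s).symm
    _ = max s (1 - s) := max_comm _ _

theorem hasDerivAt_fBro_of_pos {s x : ℝ} (hx : x ≠ 0) (hw : 0 < hBro s / (4 * x⁻¹ + hBro s)) :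
    HasDerivAt (fun z => fBro z s)
      (x⁻¹ * (fBro x s * (1 - fBro x s) * (2 * fBro x s - 1))) x :=
  hasDerivAt_half_one_add_sqrt_of_logistic
    (hasDerivAt_div_mul_inv_add hx (div_ne_zero_iff.mp hw.ne').2) hw

theorem fBro_of_hBro_eq_zero {s : ℝ} (hs : hBro s = 0) (x : ℝ) : fBro x s = 1 / 2 := by
  simp [fBro, hs]

theorem hasDerivAt_fBro {s x : ℝ} (hs : 0 ≤ hBro s) (hx : 0 < x) :
    HasDerivAt (fun z => fBro z s)
      (x⁻¹ * (fBro x s * (1 - fBro x s) * (2 * fBro x s - 1))) x := by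
  rcases hs.eq_or_lt' with hzero | hpos
  · simpa [fBro_of_hBro_eq_zero hzero] using hasDerivAt_const x (1 / 2 : ℝ)
  · exact hasDerivAt_fBro_of_pos hx.ne' (by positivity)

theorem fBro_solves_generator_ode_general :
    ∀ s ∈ Ioo (0 : ℝ) 1,
      (∀ x > (0 : ℝ), DifferentiableAt ℝ (fun z => fBro z s) x) ∧
      fBro 1 s = max s (1 - s) ∧
      (∀ x > (0 : ℝ), x * deriv (fun z => fBro z s) x
        = fBro x s * (1 - fBro x s) * (2 * fBro x s - 1)) := by
  intro s hs
  have hderiv {x : ℝ} (hx : 0 < x) := hasDerivAt_fBro (hBro_nonneg hs) hx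
  refine ⟨fun x hx => (hderiv hx).differentiableAt, fBro_one hs.1.ne' hs.2.ne, fun x hx => ?_⟩
  rw [(hderiv hx).deriv, mul_inv_cancel_left₀ hx.ne']

/-- **The Brownian locally largest family solves the generator ODE.**  For every
`s ∈ [1/2, 1)`, the map `u : x ↦ 𝚏_x(s)` is differentiable on `(0,∞)`, satisfies
`u(1) = s`, and solves `x·u'(x) = u(x)·(1 − u(x))·(2u(x) − 1)` for all `x > 0`. -/
theorem fBro_solves_generator_ode :
    ∀ s ∈ Ico ((1:ℝ)/2) 1,
      (∀ x > (0:ℝ), DifferentiableAt ℝ (fun z => fBro z s) x) ∧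
      fBro 1 s = s ∧
      (∀ x > (0:ℝ), x * deriv (fun z => fBro z s) x
        = fBro x s * (1 - fBro x s) * (2 * fBro x s - 1)) := by
  intro s hs
  have hmax : max s (1 - s) = s := max_eq_left (by linarith [hs.1])
  simpa only [hmax] using fBro_solves_generator_ode_general s ⟨by linarith [hs.1], hs.2⟩
end
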